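/- arXiv:1309.7209 — 2 statements merged into one kernel-verified Lean document; each statement's English description precedes it below -/
import Mathlib

section
/- (Theorem 1, part 2: limiting expected squared jump distance.) In the setting of Theorem 1 part 1 (densities π^(d) with L^(d) = log π^(d) twice continuously differentiable, scalings s^(d) satisfying the four limiting conditions (i)–(iv), λ^(d) = ℓ/s^(d), X^(d) ∼ π^(d), Z^(d) ∼ N(0, I_d) and B independent with density ρ satisfying ρ(b) = e^{−b} ρ(−b)), let T^(d) be d×d symmetric positive-definite matrices satisfying Trace[(T^(d))²] / (Trace[T^(d)])² → 0 as d → ∞. Define ‖z‖²_{T^(d)} = ⟨z, T^(d) z⟩. Then the rescaled expected squared jump distance ((s^(d))² / Trace[T^(d)]) · (λ^(d))² · E[ ‖Z^(d)‖²_{T^(d)} · min(1, exp( L^(d)(X^(d) + λ^(d) Z^(d)) − L^(d)(X^(d)) + B )) ] converges, as d → ∞, to J(ℓ) := ℓ² · α(ℓ), where α(ℓ) = 2 · E[Φ(B/ℓ − ℓ/2)] and Φ is the standard normal cumulative distribution function. -/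
open MeasureTheory ProbabilityTheory Real Filter Topology

/-- The standard normal cumulative distribution function `Φ`. -/
noncomputable def stdNormalCDF (x : ℝ) : ℝ :=
  ∫ t in Set.Iic x, Real.exp (-t ^ 2 / 2) / Real.sqrt (2 * Real.pi)

/-- The standard Gaussian measure `N(0, I_d)` on `ℝ^d`. -/
noncomputable def stdGaussian (d : ℕ) : Measure (Fin d → ℝ) :=
  Measure.pi fun _ : Fin d => gaussianReal 0 1

/-- The Hessian matrix `H(x) = [∂²_{ij} L(x)]` of a function `L` on `ℝ^d`. -/
noncomputable def hessian {d : ℕ} (L : (Fin d → ℝ) → ℝ) (x : Fin d → ℝ) :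
    Matrix (Fin d) (Fin d) ℝ := fun i j =>
  fderiv ℝ (fun y => fderiv ℝ L y (Pi.single j 1)) x (Pi.single i 1)

/-- The squared Euclidean norm of the gradient of `L` at `x`, `‖∇L(x)‖²`. -/
noncomputable def gradNormSq {d : ℕ} (L : (Fin d → ℝ) → ℝ) (x : Fin d → ℝ) : ℝ :=
  ∑ i, (fderiv ℝ L x (Pi.single i 1)) ^ 2

/-!
By Taylor's formula, the log-ratio `L (X + ℓ Z / s) - L X` is `ℓ ⟨∇L X, Z⟩ / s` plus
`ℓ² ⟨Z, H X Z⟩ / (2 s²)` up to the oscillation of the Hessian along the jump. A Gaussian quadratic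
form `⟨Z, A Z⟩` has mean `tr A` and variance of order `tr A²`, so the second term tends to
`-ℓ² / 2` since `tr H X / s² → -1`, while given `X` the first is centred Gaussian with standard
deviation `ℓ ‖∇L X‖ / s → ℓ`. The same variance bound shows that `‖Z‖²_T / tr T` tends to `1` in
`L¹`, so that the squared jump distance decouples from the bounded acceptance probability. Finally
`E[1 ∧ exp (ℓ G - ℓ² / 2 + b)] = Φ (b / ℓ - ℓ / 2) + e^b Φ (-b / ℓ - ℓ / 2)` for standard Gaussian
`G`, and the symmetry of `ρ` gives both terms the same mean, which is where the factor `2` in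
`α ℓ` comes from.
-/

section ConvergenceInProbability

lemma measure_prod_lt_le {α β : Type*} [MeasurableSpace α] [MeasurableSpace β]
    {μ : Measure α} [IsProbabilityMeasure μ] {ν : Measure β} [IsProbabilityMeasure ν]
    {F : α × β → ℝ} {r : α → ℝ} (hF : Measurable F) (hF0 : ∀ ω, 0 ≤ F ω)
    (hFi : ∀ x, Integrable (fun z ↦ F (x, z)) ν) (hFr : ∀ x, ∫ z, F (x, z) ∂ν ≤ r x)
    {ε : ℝ} (hε : 0 < ε) (δ : ℝ) :
    μ.prod ν {ω | ε < F ω} ≤ μ {x | δ < r x} + ENNReal.ofReal (δ / ε) := by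
  have hslice (x : α) : ν {z | ε < F (x, z)} ≤
      {x | δ < r x}.indicator 1 x + ENNReal.ofReal (δ / ε) := by
    by_cases hx : δ < r x
    · simpa [hx] using prob_le_one.trans le_self_add
    · have hmarkov := mul_meas_ge_le_integral_of_nonneg (ae_of_all _ fun z ↦ hF0 (x, z)) (hFi x) ε
      have hreal : ν.real {z | ε ≤ F (x, z)} ≤ δ / ε :=
        (le_div_iff₀' hε).2 (hmarkov.trans ((hFr x).trans (not_lt.1 hx)))
      calc ν {z | ε < F (x, z)} ≤ ν {z | ε ≤ F (x, z)} :=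
            measure_mono fun z (hz : ε < F (x, z)) ↦ hz.le
        _ ≤ ENNReal.ofReal (δ / ε) :=
            (ENNReal.le_ofReal_iff_toReal_le (measure_ne_top _ _)
              (measureReal_nonneg.trans hreal)).2 hreal
        _ ≤ _ := le_add_self
  calc μ.prod ν {ω | ε < F ω} = ∫⁻ x, ν {z | ε < F (x, z)} ∂μ :=
        Measure.prod_apply (measurableSet_lt measurable_const hF)
    _ ≤ ∫⁻ x, ({x | δ < r x}.indicator 1 x + ENNReal.ofReal (δ / ε)) ∂μ := lintegral_mono hslice
    _ ≤ μ {x | δ < r x} + ENNReal.ofReal (δ / ε) := by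
        rw [lintegral_add_right _ measurable_const, lintegral_const, measure_univ, mul_one]
        gcongr
        exact lintegral_indicator_one_le _

lemma integrable_comp_of_abs_le {α : Type*} [MeasurableSpace α] {μ : Measure α}
    [IsFiniteMeasure μ] {φ : ℝ → ℝ} (hφ : Measurable φ) {M : ℝ} (hM : ∀ u, |φ u| ≤ M)
    {U : α → ℝ} (hU : Measurable U) : Integrable (fun x ↦ φ (U x)) μ :=
  .of_bound (hφ.comp hU).aestronglyMeasurable M (ae_of_all _ fun _ ↦ hM _)

lemma abs_integral_comp_sub_integral_comp_le {α : Type*} [MeasurableSpace α] {μ : Measure α}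
    [IsProbabilityMeasure μ] {φ : ℝ → ℝ} (hφ : Measurable φ) {M : ℝ} (hM : ∀ u, |φ u| ≤ M)
    {V W : α → ℝ} (hV : Measurable V) (hW : Measurable W) {δ η : ℝ} (hη : 0 ≤ η)
    (hclose : ∀ u v, |u - v| ≤ δ → |φ u - φ v| ≤ η) :
    |∫ x, φ (W x) ∂μ - ∫ x, φ (V x) ∂μ| ≤ η + μ.real {x | δ < |W x - V x|} * (2 * M) := by
  have hfar : MeasurableSet {x | δ < |W x - V x|} :=
    measurableSet_lt measurable_const (hW.sub hV).abs
  have hint {U : α → ℝ} (hU : Measurable U) : Integrable (fun x ↦ φ (U x)) μ :=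
    integrable_comp_of_abs_le hφ hM hU
  have hpointwise (x : α) : |φ (W x) - φ (V x)| ≤
      η + {x | δ < |W x - V x|}.indicator (fun _ ↦ 2 * M) x := by
    by_cases hx : x ∈ {x | δ < |W x - V x|}
    · rw [Set.indicator_of_mem hx]
      linarith [abs_sub (φ (W x)) (φ (V x)), hM (W x), hM (V x)]
    · rw [Set.indicator_of_notMem hx, add_zero]
      exact hclose _ _ (not_lt.1 hx)
  calc |∫ x, φ (W x) ∂μ - ∫ x, φ (V x) ∂μ|
      ≤ ∫ x, |φ (W x) - φ (V x)| ∂μ := by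
        rw [← integral_sub (hint hW) (hint hV)]
        exact abs_integral_le_integral_abs
    _ ≤ ∫ x, (η + {x | δ < |W x - V x|}.indicator (fun _ ↦ 2 * M) x) ∂μ :=
        integral_mono ((hint hW).sub (hint hV)).abs
          ((integrable_const _).add ((integrable_const _).indicator hfar)) hpointwise
    _ = η + μ.real {x | δ < |W x - V x|} * (2 * M) := by
        rw [integral_add (integrable_const _) ((integrable_const _).indicator hfar),
          integral_indicator_const _ hfar, integral_const, probReal_univ, one_smul, smul_eq_mul]

variable {ι : Type*} {Ω : ι → Type*} [∀ i, MeasurableSpace (Ω i)] {l : Filter ι}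

/-- Convergence to `0` in probability of random variables `R i` that live on different probability
spaces `(Ω i, P i)`. Only large positive values count as deviations, so that a signed sequence
enters through its absolute value. -/
def TendstoZeroInProb (P : ∀ i, Measure (Ω i)) (R : ∀ i, Ω i → ℝ) (l : Filter ι) : Prop :=
  ∀ ε > (0 : ℝ), Tendsto (fun i ↦ P i {ω | ε < R i ω}) l (𝓝 0)

namespace TendstoZeroInProb

variable {P : ∀ i, Measure (Ω i)} {R S : ∀ i, Ω i → ℝ}

lemma mono (hS : TendstoZeroInProb P S l) (hRS : ∀ i ω, R i ω ≤ S i ω) :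
    TendstoZeroInProb P R l := fun ε hε ↦
  tendsto_of_tendsto_of_tendsto_of_le_of_le tendsto_const_nhds (hS ε hε) (fun _ ↦ zero_le)
    fun i ↦ measure_mono fun ω (hω : ε < R i ω) ↦ hω.trans_le (hRS i ω)

lemma add (hR : TendstoZeroInProb P R l) (hS : TendstoZeroInProb P S l) :
    TendstoZeroInProb P (fun i ω ↦ R i ω + S i ω) l := by
  intro ε hε
  have hsum := (hR (ε / 2) (half_pos hε)).add (hS (ε / 2) (half_pos hε))
  rw [add_zero] at hsum
  refine tendsto_of_tendsto_of_tendsto_of_le_of_le tendsto_const_nhds hsum (fun _ ↦ zero_le)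
    fun i ↦ (measure_mono fun ω (hω : ε < R i ω + S i ω) ↦ ?_).trans (measure_union_le _ _)
  by_contra! hsmall
  simp only [Set.mem_union, Set.mem_ofPred_eq, not_or, not_lt] at hsmall
  linarith

lemma const_mul (hR : TendstoZeroInProb P R l) {c : ℝ} (hc : 0 ≤ c) :
    TendstoZeroInProb P (fun i ω ↦ c * R i ω) l := by
  intro ε hε
  refine tendsto_of_tendsto_of_tendsto_of_le_of_le tendsto_const_nhds
    (hR (ε / (c + 1)) (by positivity)) (fun _ ↦ zero_le)
    fun i ↦ measure_mono fun ω (hω : ε < c * R i ω) ↦ ?_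
  have hR0 : 0 < R i ω := pos_of_mul_pos_right (hε.trans hω) hc
  rw [Set.mem_ofPred_eq, div_lt_iff₀' (by positivity)]
  linarith

lemma sqrt (hR : TendstoZeroInProb P R l) : TendstoZeroInProb P (fun i ω ↦ √(R i ω)) l := by
  intro ε hε
  simpa only [Real.lt_sqrt hε.le] using hR (ε ^ 2) (by positivity)

section Prod

variable {Ω' : ι → Type*} [∀ i, MeasurableSpace (Ω' i)] {Q : ∀ i, Measure (Ω' i)}
  [∀ i, IsProbabilityMeasure (Q i)]

lemma comp_fst (hR : TendstoZeroInProb P R l) :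
    TendstoZeroInProb (fun i ↦ (P i).prod (Q i)) (fun i ω ↦ R i ω.1) l := by
  intro ε hε
  have hprod (i : ι) :
      (P i).prod (Q i) {ω | ε < R i ω.1} = P i {ω | ε < R i ω} := by
    rw [show {ω : Ω i × Ω' i | ε < R i ω.1} = {ω | ε < R i ω} ×ˢ Set.univ by ext; simp,
      Measure.prod_prod, measure_univ, mul_one]
  simpa only [hprod] using hR ε hε

lemma of_integral_le [∀ i, IsProbabilityMeasure (P i)] {F : ∀ i, Ω i × Ω' i → ℝ}
    (hF : ∀ i, Measurable (F i)) (hF0 : ∀ i ω, 0 ≤ F i ω)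
    (hFi : ∀ i x, Integrable (fun z ↦ F i (x, z)) (Q i))
    (hS : TendstoZeroInProb P S l) (hFS : ∀ i x, ∫ z, F i (x, z) ∂Q i ≤ S i x) :
    TendstoZeroInProb (fun i ↦ (P i).prod (Q i)) F l := by
  intro ε hε
  rw [ENNReal.tendsto_nhds_zero]
  intro η hη
  obtain ⟨κ, hκ, hκη⟩ := ENNReal.lt_iff_exists_nnreal_btwn.1 (ENNReal.half_pos hη.ne')
  have hκ0 : 0 < κ := ENNReal.coe_pos.1 hκ
  filter_upwards [ENNReal.tendsto_nhds_zero.1 (hS (ε * κ) (by positivity)) κ hκ] with i hi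
  calc (P i).prod (Q i) {ω | ε < F i ω}
      ≤ P i {x | ε * κ < S i x} + ENNReal.ofReal (ε * κ / ε) :=
        measure_prod_lt_le (hF i) (hF0 i) (hFi i) (hFS i) hε _
    _ ≤ η / 2 + η / 2 := by
        rw [mul_div_cancel_left₀ _ hε.ne', ENNReal.ofReal_coe_nnreal]
        exact add_le_add (hi.trans hκη.le) hκη.le
    _ = η := ENNReal.add_halves η

end Prod

lemma tendsto_integral_sub [∀ i, IsProbabilityMeasure (P i)] {V W : ∀ i, Ω i → ℝ}
    (hVW : TendstoZeroInProb P (fun i ω ↦ |W i ω - V i ω|) l)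
    (hV : ∀ i, Measurable (V i)) (hW : ∀ i, Measurable (W i)) {φ : ℝ → ℝ}
    (hφ : UniformContinuous φ) {M : ℝ} (hM : ∀ u, |φ u| ≤ M) :
    Tendsto (fun i ↦ ∫ ω, φ (W i ω) ∂P i - ∫ ω, φ (V i ω) ∂P i) l (𝓝 0) := by
  rw [Metric.tendsto_nhds]
  intro η hη
  obtain ⟨δ, hδ, hφδ⟩ := Metric.uniformContinuous_iff.1 hφ (η / 2) (half_pos hη)
  have hclose (u v : ℝ) (huv : |u - v| ≤ δ / 2) : |φ u - φ v| ≤ η / 2 :=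
    (hφδ (huv.trans_lt (half_lt_self hδ))).le
  have hlim : Tendsto (fun i ↦ η / 2 + (P i).real {ω | δ / 2 < |W i ω - V i ω|} * (2 * M))
      l (𝓝 (η / 2)) := by
    simpa [Measure.real] using
      (((ENNReal.tendsto_toReal ENNReal.zero_ne_top).comp (hVW _ (half_pos hδ))).mul_const
        (2 * M)).const_add (η / 2)
  filter_upwards [hlim.eventually_lt_const (half_lt_self hη)] with i hi
  rw [dist_zero_right, Real.norm_eq_abs]
  exact (abs_integral_comp_sub_integral_comp_le hφ.continuous.measurable hM (hV i) (hW i)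
    (half_pos hη).le hclose).trans_lt hi

end TendstoZeroInProb

end ConvergenceInProbability

section GaussianVectors

open scoped Matrix
open WithLp (toLp ofLp)

variable {κ : Type*} [Fintype κ]

variable (κ) in
/-- The standard Gaussian measure on `κ → ℝ`, for an arbitrary finite index type; the measure
`stdGaussian d` is the case `κ = Fin d`. -/
noncomputable abbrev gaussianPi : Measure (κ → ℝ) := Measure.pi fun _ ↦ gaussianReal 0 1

section LinearFunctional

variable [DecidableEq κ]

lemma map_pi_gaussianReal_eq_map_mul (A : (κ → ℝ) →L[ℝ] ℝ) :
    (gaussianPi κ).map A =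
      (gaussianReal 0 1).map (√(∑ k, A (Pi.single k 1) ^ 2) * ·) := by
  let A' : StrongDual ℝ (EuclideanSpace ℝ κ) := A ∘L (EuclideanSpace.equiv κ ℝ : _ →L[ℝ] _)
  have hcomp : A = A' ∘ toLp 2 := rfl
  have hnorm : ‖A'‖ = √(∑ k, A (Pi.single k 1) ^ 2) := by
    rw [← Real.sqrt_sq (norm_nonneg A'), (EuclideanSpace.basisFun κ ℝ).norm_dual]
    simp only [EuclideanSpace.basisFun_apply]
    rfl
  rw [gaussianReal_map_const_mul, hcomp,
    ← Measure.map_map A'.continuous.measurable (by fun_prop), map_pi_eq_stdGaussian,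
    IsGaussian.map_eq_gaussianReal, integral_strongDual_stdGaussian, variance_dual_stdGaussian,
    hnorm, mul_zero, mul_one]
  congr 1
  exact NNReal.eq (Real.coe_toNNReal _ (sq_nonneg _))

end LinearFunctional

section SumOfSquares

lemma memLp_sq_gaussianReal : MemLp (fun x : ℝ ↦ x ^ 2) 2 (gaussianReal 0 1) := by
  refine (memLp_two_iff_integrable_sq (by fun_prop)).2 ?_
  have hfour := (memLp_id_gaussianReal (μ := 0) (v := 1) 4).integrable_norm_pow (p := 4) (by simp)
  exact hfour.congr (ae_of_all _ fun x ↦ by simp [← pow_mul, Even.pow_abs (show Even 4 by decide)])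

lemma integral_sq_gaussianReal : ∫ x : ℝ, x ^ 2 ∂gaussianReal 0 1 = 1 := by
  simpa [variance_of_integral_eq_zero aemeasurable_id'] using
    variance_fun_id_gaussianReal (μ := 0) (v := 1)

variable (c : κ → ℝ)

lemma memLp_mul_sq_eval (k : κ) : MemLp (fun z : κ → ℝ ↦ c k * z k ^ 2) 2 (gaussianPi κ) :=
  (memLp_sq_gaussianReal.const_mul (c k)).comp_measurePreserving (measurePreserving_eval _ k)

lemma memLp_sum_mul_sq : MemLp (fun z : κ → ℝ ↦ ∑ k, c k * z k ^ 2) 2 (gaussianPi κ) :=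
  memLp_finsetSum _ fun k _ ↦ memLp_mul_sq_eval c k

lemma integral_sum_mul_sq : ∫ z : κ → ℝ, ∑ k, c k * z k ^ 2 ∂gaussianPi κ = ∑ k, c k := by
  rw [integral_finsetSum _ fun k _ ↦ (memLp_mul_sq_eval c k).integrable one_le_two]
  refine Finset.sum_congr rfl fun k _ ↦ ?_
  rw [integral_comp_eval (μ := fun _ : κ ↦ gaussianReal 0 1) (f := fun x ↦ c k * x ^ 2)
    (by fun_prop), integral_const_mul, integral_sq_gaussianReal, mul_one]

lemma variance_sum_mul_sq : Var[fun z : κ → ℝ ↦ ∑ k, c k * z k ^ 2; gaussianPi κ] =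
    Var[fun x ↦ x ^ 2; gaussianReal 0 1] * ∑ k, c k ^ 2 := by
  have hindep := variance_sum_pi (μ := fun _ : κ ↦ gaussianReal 0 1)
    fun k ↦ memLp_sq_gaussianReal.const_mul (c k)
  simp only [variance_const_mul] at hindep
  rw [← Finset.sum_fn, hindep, Finset.mul_sum]
  simp only [mul_comm]

end SumOfSquares

lemma measurePreserving_repr (b : OrthonormalBasis κ ℝ (EuclideanSpace ℝ κ)) :
    MeasurePreserving (fun z : κ → ℝ ↦ ofLp (b.repr (toLp 2 z)))
      (gaussianPi κ) (gaussianPi κ) := by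
  have htoLp : MeasurePreserving (toLp 2) (gaussianPi κ)
      (ProbabilityTheory.stdGaussian (EuclideanSpace ℝ κ)) :=
    ⟨by fun_prop, map_pi_eq_stdGaussian⟩
  have hrepr : MeasurePreserving b.repr (ProbabilityTheory.stdGaussian (EuclideanSpace ℝ κ))
      (ProbabilityTheory.stdGaussian (EuclideanSpace ℝ κ)) :=
    ⟨b.repr.continuous.measurable, stdGaussian_map b.repr⟩
  exact (htoLp.symm (MeasurableEquiv.toLp 2 (κ → ℝ))).comp (hrepr.comp htoLp)

section QuadraticForm

section Spectral

variable [DecidableEq κ] {A : Matrix κ κ ℝ}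

lemma dotProduct_mulVec_eq_sum_eigenvalues (hA : A.IsHermitian) (z : κ → ℝ) :
    z ⬝ᵥ A *ᵥ z = ∑ k, hA.eigenvalues k * hA.eigenvectorBasis.repr (toLp 2 z) k ^ 2 := by
  have hcoord (k : κ) : inner ℝ (toLp 2 (A *ᵥ z)) (hA.eigenvectorBasis k) =
      hA.eigenvalues k * inner ℝ (hA.eigenvectorBasis k) (toLp 2 z) := by
    have hT : Aᵀ = A := hA
    simp only [EuclideanSpace.inner_eq_star_dotProduct, star_trivial, Matrix.dotProduct_mulVec,
      ← Matrix.mulVec_transpose, hT, hA.mulVec_eigenvectorBasis, smul_dotProduct, smul_eq_mul,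
      dotProduct_comm z]
  calc z ⬝ᵥ A *ᵥ z = inner ℝ (toLp 2 (A *ᵥ z)) (toLp 2 z) := by
        simp [EuclideanSpace.inner_eq_star_dotProduct]
    _ = ∑ k, hA.eigenvalues k * hA.eigenvectorBasis.repr (toLp 2 z) k ^ 2 := by
        rw [← hA.eigenvectorBasis.sum_inner_mul_inner]
        simp only [hcoord, OrthonormalBasis.repr_apply_apply, sq, mul_assoc]

lemma trace_mul_self_eq_sum_eigenvalues_sq (hA : A.IsHermitian) :
    (A * A).trace = ∑ k, hA.eigenvalues k ^ 2 := by
  conv_lhs =>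
    rw [hA.spectral_theorem, ← map_mul, Matrix.diagonal_mul_diagonal,
      Unitary.conjStarAlgAut_apply, Matrix.trace_mul_cycle, Unitary.coe_star_mul_self, one_mul,
      Matrix.trace_diagonal]
  simp [sq]

lemma identDistrib_dotProduct_mulVec (hA : A.IsHermitian) :
    IdentDistrib (fun z : κ → ℝ ↦ z ⬝ᵥ A *ᵥ z) (fun z ↦ ∑ k, hA.eigenvalues k * z k ^ 2)
      (gaussianPi κ) (gaussianPi κ) := by
  have hmeas : Measurable fun z : κ → ℝ ↦ ∑ k, hA.eigenvalues k * z k ^ 2 :=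
    Finset.measurable_fun_sum _ fun k _ ↦ ((measurable_pi_apply k).pow_const 2).const_mul _
  have hrepr := measurePreserving_repr hA.eigenvectorBasis
  simp only [dotProduct_mulVec_eq_sum_eigenvalues hA]
  exact ⟨(hmeas.comp hrepr.measurable).aemeasurable, hmeas.aemeasurable,
    (Measure.map_map hmeas hrepr.measurable).symm.trans (congrArg (Measure.map _) hrepr.map_eq)⟩

end Spectral

lemma integral_abs_sub_integral_le_sqrt_variance {α : Type*} [MeasurableSpace α] {μ : Measure α}
    [IsProbabilityMeasure μ] {X : α → ℝ} (hX : MemLp X 2 μ) :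
    ∫ ω, |X ω - ∫ x, X x ∂μ| ∂μ ≤ √Var[X; μ] := by
  have hnonneg := variance_nonneg (fun ω ↦ |X ω - ∫ x, X x ∂μ|) μ
  rw [variance_eq_sub (X := fun ω ↦ |X ω - ∫ x, X x ∂μ|) (hX.sub (memLp_const _)).abs] at hnonneg
  refine Real.le_sqrt_of_sq_le ?_
  rw [variance_eq_integral hX.aemeasurable]
  simpa using hnonneg

variable {A : Matrix κ κ ℝ}

lemma memLp_dotProduct_mulVec (hA : A.IsSymm) :
    MemLp (fun z : κ → ℝ ↦ z ⬝ᵥ A *ᵥ z) 2 (gaussianPi κ) := by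
  classical
  exact (identDistrib_dotProduct_mulVec (Matrix.isHermitian_iff_isSymm.2 hA)).symm.memLp_snd
    (memLp_sum_mul_sq _)

lemma integral_abs_dotProduct_mulVec_sub_trace_le (hA : A.IsSymm) :
    ∫ z : κ → ℝ, |z ⬝ᵥ A *ᵥ z - A.trace| ∂gaussianPi κ ≤
      √(Var[fun x ↦ x ^ 2; gaussianReal 0 1] * (A * A).trace) := by
  classical
  have hAH : A.IsHermitian := Matrix.isHermitian_iff_isSymm.2 hA
  have hmean : ∫ z : κ → ℝ, z ⬝ᵥ A *ᵥ z ∂gaussianPi κ = A.trace := by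
    rw [(identDistrib_dotProduct_mulVec hAH).integral_eq, integral_sum_mul_sq,
      hAH.trace_eq_sum_eigenvalues]
    rfl
  have hvar : Var[fun z : κ → ℝ ↦ z ⬝ᵥ A *ᵥ z; gaussianPi κ] =
      Var[fun x ↦ x ^ 2; gaussianReal 0 1] * (A * A).trace := by
    rw [(identDistrib_dotProduct_mulVec hAH).variance_eq, variance_sum_mul_sq,
      trace_mul_self_eq_sum_eigenvalues_sq hAH]
  rw [← hmean, ← hvar]
  exact integral_abs_sub_integral_le_sqrt_variance (memLp_dotProduct_mulVec hA)

lemma abs_integral_dotProduct_mulVec_mul_sub_le (hA : A.IsSymm) {α : Type*}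
    [MeasurableSpace α] {μ : Measure α} [IsProbabilityMeasure μ]
    {Z : α → κ → ℝ} (hZ : MeasurePreserving Z μ (gaussianPi κ))
    {f : α → ℝ} (hf : Measurable f) (hf1 : ∀ ω, |f ω| ≤ 1) :
    |∫ ω, (Z ω ⬝ᵥ A *ᵥ Z ω) * f ω ∂μ - A.trace * ∫ ω, f ω ∂μ| ≤
      √(Var[fun x ↦ x ^ 2; gaussianReal 0 1] * (A * A).trace) := by
  have hQ := (memLp_dotProduct_mulVec hA).integrable one_le_two
  have hQZ : Integrable (fun ω ↦ Z ω ⬝ᵥ A *ᵥ Z ω) μ := hZ.integrable_comp_of_integrable hQ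
  have hdev : Integrable (fun ω ↦ Z ω ⬝ᵥ A *ᵥ Z ω - A.trace) μ := hQZ.sub (integrable_const _)
  calc |∫ ω, (Z ω ⬝ᵥ A *ᵥ Z ω) * f ω ∂μ - A.trace * ∫ ω, f ω ∂μ|
      = |∫ ω, (Z ω ⬝ᵥ A *ᵥ Z ω - A.trace) * f ω ∂μ| := by
        rw [← integral_const_mul, ← integral_sub]
        · simp only [sub_mul]
        · exact hQZ.mul_bdd hf.aestronglyMeasurable (ae_of_all _ hf1)
        · exact (Integrable.of_bound hf.aestronglyMeasurable 1 (ae_of_all _ hf1)).const_mul _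
    _ ≤ ∫ ω, |Z ω ⬝ᵥ A *ᵥ Z ω - A.trace| ∂μ := by
        rw [← Real.norm_eq_abs]
        refine norm_integral_le_of_norm_le hdev.abs (ae_of_all _ fun ω ↦ ?_)
        rw [norm_mul]
        exact mul_le_of_le_one_right (norm_nonneg _) (hf1 ω)
    _ = ∫ z, |z ⬝ᵥ A *ᵥ z - A.trace| ∂gaussianPi κ := by
        have hmeas := (hQ.sub (integrable_const A.trace)).abs.aestronglyMeasurable
        rw [← hZ.map_eq] at hmeas ⊢
        exact (integral_map hZ.aemeasurable hmeas).symm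
    _ ≤ √(Var[fun x ↦ x ^ 2; gaussianReal 0 1] * (A * A).trace) :=
        integral_abs_dotProduct_mulVec_sub_trace_le hA

end QuadraticForm

section RandomLinearFunctional

variable [DecidableEq κ] {α : Type*} [MeasurableSpace α] {A : α → ((κ → ℝ) →L[ℝ] ℝ)}

lemma measurable_sqrt_sum_sq_apply_single (hA : Measurable fun p : α × (κ → ℝ) ↦ A p.1 p.2) :
    Measurable fun x ↦ √(∑ k, A x (Pi.single k 1) ^ 2) := by
  have hcoord (k : κ) : Measurable fun x ↦ A x (Pi.single k 1) :=
    hA.comp (measurable_id.prodMk measurable_const)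
  fun_prop

lemma integral_comp_linear_gaussianPi {μ : Measure α} [IsProbabilityMeasure μ]
    (hA : Measurable fun p : α × (κ → ℝ) ↦ A p.1 p.2)
    {φ : ℝ → ℝ} (hφ : Measurable φ) {M : ℝ} (hM : ∀ u, |φ u| ≤ M) :
    ∫ p, φ (A p.1 p.2) ∂μ.prod (gaussianPi κ) =
      ∫ p, φ (√(∑ k, A p.1 (Pi.single k 1) ^ 2) * p.2) ∂μ.prod (gaussianReal 0 1) := by
  have hscaled : Measurable fun p : α × ℝ ↦ √(∑ k, A p.1 (Pi.single k 1) ^ 2) * p.2 :=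
    ((measurable_sqrt_sum_sq_apply_single hA).comp measurable_fst).mul measurable_snd
  rw [integral_prod _ (integrable_comp_of_abs_le hφ hM hA),
    integral_prod _ (integrable_comp_of_abs_le hφ hM hscaled)]
  congr with x
  rw [← integral_map (φ := A x) (by fun_prop) (by fun_prop), map_pi_gaussianReal_eq_map_mul,
    integral_map (by fun_prop) (by fun_prop)]

end RandomLinearFunctional

section Limits

variable {ι : Type*} {l : Filter ι} {κ : ι → Type*} [∀ i, Fintype (κ i)]
  {Ω : ι → Type*} [∀ i, MeasurableSpace (Ω i)] {P : ∀ i, Measure (Ω i)}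
  [∀ i, IsProbabilityMeasure (P i)]

lemma tendsto_integral_comp_linear_gaussianPi [∀ i, DecidableEq (κ i)]
    {A : ∀ i, Ω i → ((κ i → ℝ) →L[ℝ] ℝ)}
    (hA : ∀ i, Measurable fun p : Ω i × (κ i → ℝ) ↦ A i p.1 p.2) {a : ℝ}
    (hAa : TendstoZeroInProb P (fun i x ↦ |√(∑ k, A i x (Pi.single k 1) ^ 2) - a|) l)
    {φ : ℝ → ℝ} (hφ : UniformContinuous φ) {M : ℝ} (hM : ∀ u, |φ u| ≤ M) :
    Tendsto (fun i ↦ ∫ p, φ (A i p.1 p.2) ∂(P i).prod (gaussianPi (κ i))) l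
      (𝓝 (∫ g, φ (a * g) ∂gaussianReal 0 1)) := by
  let r (i : ι) (x : Ω i) : ℝ := √(∑ k, A i x (Pi.single k 1) ^ 2)
  have hr (i : ι) : Measurable (r i) := measurable_sqrt_sum_sq_apply_single (hA i)
  have hclose : TendstoZeroInProb (fun i ↦ (P i).prod (gaussianReal 0 1))
      (fun i p ↦ |r i p.1 * p.2 - a * p.2|) l := by
    have habs : Integrable (fun g : ℝ ↦ |g|) (gaussianReal 0 1) := IsGaussian.integrable_id.abs
    simp only [← sub_mul, abs_mul]
    refine .of_integral_le (fun i ↦ by fun_prop) (fun i p ↦ by positivity) (fun i x ↦ ?_)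
      (hAa.const_mul (c := ∫ g, |g| ∂gaussianReal 0 1) (by positivity)) fun i x ↦ ?_
    · exact habs.const_mul |r i x - a|
    · exact (integral_const_mul |r i x - a| _).trans_le (mul_comm _ _).le
  have hlim := hclose.tendsto_integral_sub (fun i ↦ by fun_prop) (fun i ↦ by fun_prop) hφ hM
  have hfst (i : ι) : ∫ p, φ (a * p.2) ∂(P i).prod (gaussianReal 0 1) =
      ∫ g, φ (a * g) ∂gaussianReal 0 1 := by
    rw [integral_fun_snd (f := fun g ↦ φ (a * g)), probReal_univ, one_smul]
  simpa only [integral_comp_linear_gaussianPi (hA _) hφ.continuous.measurable hM, hfst,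
    sub_add_cancel, zero_add] using hlim.add_const (∫ g, φ (a * g) ∂gaussianReal 0 1)

lemma TendstoZeroInProb.dotProduct_mulVec_sub_trace {A : ∀ i, Ω i → Matrix (κ i) (κ i) ℝ}
    (hA : ∀ i j k, Measurable fun x ↦ A i x j k) (hA_symm : ∀ i x, (A i x).IsSymm)
    (htrace : TendstoZeroInProb P (fun i x ↦ (A i x * A i x).trace) l) :
    TendstoZeroInProb (fun i ↦ (P i).prod (gaussianPi (κ i)))
      (fun i p ↦ |p.2 ⬝ᵥ A i p.1 *ᵥ p.2 - (A i p.1).trace|) l := by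
  have hmeas (i : ι) : Measurable fun p : Ω i × (κ i → ℝ) ↦
      |p.2 ⬝ᵥ A i p.1 *ᵥ p.2 - (A i p.1).trace| := by
    simp only [dotProduct, Matrix.mulVec, Matrix.trace, Matrix.diag_apply]
    fun_prop
  have hbound := (htrace.const_mul (variance_nonneg (fun x ↦ x ^ 2) (gaussianReal 0 1))).sqrt
  have hint (i : ι) (x : Ω i) : Integrable (fun z : κ i → ℝ ↦ |z ⬝ᵥ A i x *ᵥ z - (A i x).trace|)
      (gaussianPi (κ i)) :=
    (((memLp_dotProduct_mulVec (hA_symm i x)).integrable one_le_two).sub (integrable_const _)).abs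
  have hle (i : ι) (x : Ω i) := integral_abs_dotProduct_mulVec_sub_trace_le (hA_symm i x)
  exact of_integral_le (F := fun i p ↦ |p.2 ⬝ᵥ A i p.1 *ᵥ p.2 - (A i p.1).trace|) hmeas
    (fun _ _ ↦ abs_nonneg _) hint hbound hle

lemma tendsto_integral_dotProduct_mulVec_mul_div_trace_sub {T : ∀ i, Matrix (κ i) (κ i) ℝ}
    (hT : ∀ i, (T i).IsSymm) (htrace : ∀ᶠ i in l, (T i).trace ≠ 0)
    (hecc : Tendsto (fun i ↦ (T i * T i).trace / (T i).trace ^ 2) l (𝓝 0))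
    {Z : ∀ i, Ω i → κ i → ℝ} (hZ : ∀ i, MeasurePreserving (Z i) (P i) (gaussianPi (κ i)))
    {f : ∀ i, Ω i → ℝ} (hf : ∀ i, Measurable (f i)) (hf1 : ∀ i ω, |f i ω| ≤ 1) :
    Tendsto (fun i ↦ (∫ ω, (Z i ω ⬝ᵥ T i *ᵥ Z i ω) * f i ω ∂P i) / (T i).trace -
      ∫ ω, f i ω ∂P i) l (𝓝 0) := by
  have hsqrt : Tendsto (fun i ↦ √(Var[fun x ↦ x ^ 2; gaussianReal 0 1] *
      ((T i * T i).trace / (T i).trace ^ 2))) l (𝓝 0) := by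
    simpa using (hecc.const_mul Var[fun x ↦ x ^ 2; gaussianReal 0 1]).sqrt
  refine squeeze_zero_norm' ?_ hsqrt
  filter_upwards [htrace] with i hi
  rw [Real.norm_eq_abs, ← mul_div_assoc, Real.sqrt_div' _ (sq_nonneg _), Real.sqrt_sq_eq_abs,
    div_sub' hi, abs_div]
  gcongr
  exact abs_integral_dotProduct_mulVec_mul_sub_le (hT i) (hZ i) (hf i) (hf1 i)

end Limits

end GaussianVectors

section SecondOrderExpansion

lemma exists_taylor_two_eq {E : Type*} [NormedAddCommGroup E] [NormedSpace ℝ E] {f : E → ℝ}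
    (hf : ContDiff ℝ 2 f) (x w : E) : ∃ t ∈ Set.Ioo (0 : ℝ) 1,
      f (x + w) = f x + fderiv ℝ f x w + fderiv ℝ (fderiv ℝ f) (x + t • w) w w / 2 := by
  let g (t : ℝ) : ℝ := f (x + t • w)
  have hline (t : ℝ) : HasDerivAt (fun t : ℝ ↦ x + t • w) w t := by
    simpa using ((hasDerivAt_id t).smul_const w).const_add x
  have hg' (t : ℝ) : HasDerivAt g (fderiv ℝ f (x + t • w) w) t :=
    (hf.differentiable two_ne_zero _).hasFDerivAt.comp_hasDerivAt t (hline t)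
  have hf' : Differentiable ℝ (fderiv ℝ f) :=
    (hf.fderiv_right one_add_one_eq_two.le).differentiable one_ne_zero
  have hg'' (t : ℝ) : HasDerivAt (fun t : ℝ ↦ fderiv ℝ f (x + t • w) w)
      (fderiv ℝ (fderiv ℝ f) (x + t • w) w w) t := by
    simpa using ((hf' _).hasFDerivAt.comp_hasDerivAt t (hline t)).clm_apply (hasDerivAt_const t w)
  have hg : ContDiff ℝ 2 g := by fun_prop
  obtain ⟨t, ht, htaylor⟩ := taylor_mean_remainder_lagrange_iteratedDeriv (f := g) (n := 1)
    (x := 1) (x₀ := 0) zero_ne_one hg.contDiffOn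
  rw [Set.uIoo_of_le zero_le_one] at ht
  have hderiv : deriv g = fun t ↦ fderiv ℝ f (x + t • w) w := funext fun t ↦ (hg' t).deriv
  have hfirst : derivWithin g (Set.Icc 0 1) 0 = fderiv ℝ f x w := by
    rw [(hg' 0).hasDerivWithinAt.derivWithin (uniqueDiffOn_Icc zero_lt_one 0 (by simp)),
      zero_smul, add_zero]
  have hsecond : iteratedDeriv 2 g t = fderiv ℝ (fderiv ℝ f) (x + t • w) w w := by
    rw [iteratedDeriv_succ, iteratedDeriv_one, hderiv, (hg'' t).deriv]
  refine ⟨t, ht, ?_⟩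
  simp only [one_smul, zero_le_one, Set.uIcc_of_le, taylorWithinEval_succ, taylor_within_zero_eval,
    zero_smul, add_zero, CharP.cast_eq_zero, zero_add, Nat.factorial_zero, Nat.cast_one, mul_one,
    inv_one, sub_zero, one_pow, iteratedDerivWithin_one, hfirst, smul_eq_mul, one_mul,
    Nat.reduceAdd, hsecond, Nat.factorial_two, Nat.cast_ofNat, g] at htaylor
  linarith

lemma le_biSup_Ioo {v : ℝ → ℝ} (hv : Continuous v) (hv0 : ∀ t, 0 ≤ v t) {a b t : ℝ}
    (ht : t ∈ Set.Ioo a b) : v t ≤ ⨆ u ∈ Set.Ioo a b, v u := by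
  obtain ⟨M, hM⟩ := (isCompact_Icc (a := a) (b := b)).bddAbove_image hv.continuousOn
  have hbdd : BddAbove (Set.range fun u ↦ ⨆ _ : u ∈ Set.Ioo a b, v u) := by
    refine ⟨M, Set.forall_mem_range.2 fun u ↦ Real.iSup_le (fun hu ↦ ?_) ?_⟩
    · exact hM (Set.mem_image_of_mem v (Set.Ioo_subset_Icc_self hu))
    · exact (hv0 t).trans (hM (Set.mem_image_of_mem v (Set.Ioo_subset_Icc_self ht)))
  exact (ciSup_pos (f := fun _ ↦ v t) ht).ge.trans (le_ciSup hbdd t)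

open scoped Matrix

lemma sum_sum_mul_mul {κ : Type*} [Fintype κ] (A : Matrix κ κ ℝ) (z : κ → ℝ) :
    ∑ i, ∑ j, z i * A i j * z j = z ⬝ᵥ A *ᵥ z := by
  simp only [dotProduct, Matrix.mulVec, Finset.mul_sum, mul_assoc]

section Hessian

variable {d : ℕ} {L : (Fin d → ℝ) → ℝ}

lemma hessian_apply (hL : ContDiff ℝ 2 L) (x : Fin d → ℝ) (i j : Fin d) :
    hessian L x i j = fderiv ℝ (fderiv ℝ L) x (Pi.single i 1) (Pi.single j 1) := by
  have hL' : DifferentiableAt ℝ (fderiv ℝ L) x :=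
    (hL.fderiv_right one_add_one_eq_two.le).differentiable one_ne_zero x
  rw [hessian, (hL'.hasFDerivAt.clm_apply (hasFDerivAt_const _ x)).fderiv]
  simp

lemma isSymm_hessian (hL : ContDiff ℝ 2 L) (x : Fin d → ℝ) : (hessian L x).IsSymm := by
  ext i j
  rw [Matrix.transpose_apply, hessian_apply hL, hessian_apply hL]
  exact hL.contDiffAt.isSymmSndFDerivAt (by simp) _ _

lemma continuous_hessian (hL : ContDiff ℝ 2 L) : Continuous (hessian L) := by
  have hL'' : Continuous (fderiv ℝ (fderiv ℝ L)) :=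
    (hL.fderiv_right one_add_one_eq_two.le).continuous_fderiv one_ne_zero
  refine continuous_matrix fun i j ↦ ?_
  simp only [hessian_apply hL]
  exact (hL''.clm_apply continuous_const).clm_apply continuous_const

lemma fderiv_fderiv_apply_apply (hL : ContDiff ℝ 2 L) (x z : Fin d → ℝ) :
    fderiv ℝ (fderiv ℝ L) x z z = z ⬝ᵥ hessian L x *ᵥ z := by
  conv_lhs => rw [pi_eq_sum_univ' z]
  simp only [map_sum, map_smul, FunLike.coe_sum, FunLike.coe_smul, Finset.sum_apply, Pi.smul_apply,
    smul_eq_mul, ← sum_sum_mul_mul, hessian_apply hL, Finset.mul_sum]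
  rw [Finset.sum_comm]
  exact Finset.sum_congr rfl fun i _ ↦ Finset.sum_congr rfl fun j _ ↦ by ring

/-- The oscillation `sup_{t ∈ (0,1)} |⟨z, [H(x + tσz/s) - H(x)] z⟩| / s²` of the Hessian `H` of `L`
along the jump from `x = p.1` in the direction `z = p.2`, which controls the remainder of the
second-order expansion of `L`. -/
noncomputable def hessianOscillation (L : (Fin d → ℝ) → ℝ) (σ s : ℝ)
    (p : (Fin d → ℝ) × (Fin d → ℝ)) : ℝ :=
  ⨆ t ∈ Set.Ioo (0 : ℝ) 1,
    |(∑ i, ∑ j, p.2 i * ((hessian L (p.1 + (t * σ / s) • p.2) - hessian L p.1) i j) * p.2 j) /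
      s ^ 2|

lemma abs_dotProduct_hessian_sub_le (hL : ContDiff ℝ 2 L) (σ s : ℝ)
    (x z : Fin d → ℝ) {t : ℝ} (ht : t ∈ Set.Ioo (0 : ℝ) 1) :
    |(z ⬝ᵥ hessian L (x + (t * σ / s) • z) *ᵥ z - z ⬝ᵥ hessian L x *ᵥ z) / s ^ 2| ≤
      hessianOscillation L σ s (x, z) := by
  have hH := continuous_hessian hL
  have hcont : Continuous fun u : ℝ ↦
      |(z ⬝ᵥ (hessian L (x + (u * σ / s) • z) - hessian L x) *ᵥ z) / s ^ 2| := by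
    fun_prop
  simpa only [hessianOscillation, sum_sum_mul_mul, Matrix.sub_mulVec, dotProduct_sub] using
    le_biSup_Ioo hcont (fun _ ↦ abs_nonneg _) ht

lemma abs_increment_sub_quadratic_le (hL : ContDiff ℝ 2 L) (σ s : ℝ) (x z : Fin d → ℝ) :
    |L (x + (σ / s) • z) - L x - (σ / s) * fderiv ℝ L x z -
        σ ^ 2 / 2 * ((z ⬝ᵥ hessian L x *ᵥ z) / s ^ 2)| ≤
      σ ^ 2 / 2 * hessianOscillation L σ s (x, z) := by
  obtain ⟨t, ht, htaylor⟩ := exists_taylor_two_eq hL x ((σ / s) • z)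
  have hremainder : L (x + (σ / s) • z) - L x - (σ / s) * fderiv ℝ L x z -
      σ ^ 2 / 2 * ((z ⬝ᵥ hessian L x *ᵥ z) / s ^ 2) = σ ^ 2 / 2 *
        ((z ⬝ᵥ hessian L (x + (t * σ / s) • z) *ᵥ z - z ⬝ᵥ hessian L x *ᵥ z) / s ^ 2) := by
    rw [htaylor, fderiv_fderiv_apply_apply hL, smul_smul, ← mul_div_assoc]
    simp only [map_smul, Matrix.mulVec_smul, dotProduct_smul, smul_dotProduct, smul_eq_mul]
    ring
  rw [hremainder, abs_mul, abs_of_nonneg (by positivity)]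
  gcongr
  exact abs_dotProduct_hessian_sub_le hL σ s x z ht

lemma abs_increment_sub_linear_le (hL : ContDiff ℝ 2 L) (σ s : ℝ) (x z : Fin d → ℝ) :
    |L (x + (σ / s) • z) - L x - (((σ / s) • fderiv ℝ L x) z - σ ^ 2 / 2)| ≤
      σ ^ 2 / 2 * (hessianOscillation L σ s (x, z) +
        (|z ⬝ᵥ ((s ^ 2)⁻¹ • hessian L x) *ᵥ z - ((s ^ 2)⁻¹ • hessian L x).trace| +
          |(hessian L x).trace / s ^ 2 + 1|)) := by
  have hquad := abs_increment_sub_quadratic_le hL σ s x z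
  have hsplit : L (x + (σ / s) • z) - L x - (((σ / s) • fderiv ℝ L x) z - σ ^ 2 / 2) =
      (L (x + (σ / s) • z) - L x - (σ / s) * fderiv ℝ L x z -
        σ ^ 2 / 2 * ((z ⬝ᵥ hessian L x *ᵥ z) / s ^ 2)) +
      σ ^ 2 / 2 * ((z ⬝ᵥ ((s ^ 2)⁻¹ • hessian L x) *ᵥ z - ((s ^ 2)⁻¹ • hessian L x).trace) +
        ((hessian L x).trace / s ^ 2 + 1)) := by
    simp only [Matrix.smul_mulVec, dotProduct_smul, Matrix.trace_smul, FunLike.coe_smul,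
      Pi.smul_apply, smul_eq_mul]
    ring
  rw [hsplit, mul_add (σ ^ 2 / 2) (hessianOscillation L σ s (x, z))]
  refine (abs_add_le _ _).trans (add_le_add hquad ?_)
  rw [abs_mul, abs_of_nonneg (by positivity)]
  gcongr
  exact abs_add_le _ _

end Hessian

lemma TendstoZeroInProb.increment_sub_linear {ι : Type*} {l : Filter ι} {d : ι → ℕ}
    {μX : ∀ i, Measure (Fin (d i) → ℝ)} [∀ i, IsProbabilityMeasure (μX i)]
    {L : ∀ i, (Fin (d i) → ℝ) → ℝ} (hL : ∀ i, ContDiff ℝ 2 (L i)) {s : ι → ℝ} {σ : ℝ}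
    (hlap : TendstoZeroInProb μX (fun i x ↦ |(hessian (L i) x).trace / s i ^ 2 + 1|) l)
    (htrace : TendstoZeroInProb μX
      (fun i x ↦ |(hessian (L i) x * hessian (L i) x).trace / s i ^ 4|) l)
    (hosc : TendstoZeroInProb (fun i ↦ (μX i).prod (gaussianPi (Fin (d i))))
      (fun i ↦ hessianOscillation (L i) σ (s i)) l) :
    TendstoZeroInProb (fun i ↦ (μX i).prod (gaussianPi (Fin (d i))))
      (fun i p ↦ |L i (p.1 + (σ / s i) • p.2) - L i p.1 -
        (((σ / s i) • fderiv ℝ (L i) p.1) p.2 - σ ^ 2 / 2)|) l := by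
  have hscaled : TendstoZeroInProb μX (fun i x ↦
      (((s i ^ 2)⁻¹ • hessian (L i) x) * ((s i ^ 2)⁻¹ • hessian (L i) x)).trace) l := by
    refine htrace.mono fun i x ↦ le_of_eq_of_le ?_ (le_abs_self _)
    simp only [Matrix.smul_mul, Matrix.mul_smul, Matrix.trace_smul, smul_eq_mul]
    ring
  have hmeas (i : ι) (j k : Fin (d i)) :
      Measurable fun x ↦ ((s i ^ 2)⁻¹ • hessian (L i) x) j k :=
    (((continuous_hessian (hL i)).matrix_elem j k).const_smul (s i ^ 2)⁻¹).measurable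
  have hquad := dotProduct_mulVec_sub_trace hmeas
    (fun i x ↦ (isSymm_hessian (hL i) x).smul _) hscaled
  exact ((hosc.add (hquad.add hlap.comp_fst)).const_mul (c := σ ^ 2 / 2) (by positivity)).mono
    fun i p ↦ abs_increment_sub_linear_le (hL i) σ (s i) p.1 p.2

end SecondOrderExpansion

section AcceptanceProbability

/-- The Metropolis acceptance probability `min (1, e^w)` at log-ratio `w`. -/
noncomputable def acceptance (w : ℝ) : ℝ := min 1 (exp w)

lemma acceptance_nonneg (w : ℝ) : 0 ≤ acceptance w := le_min zero_le_one (exp_pos w).le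

lemma acceptance_le_one (w : ℝ) : acceptance w ≤ 1 := min_le_left _ _

lemma abs_acceptance_le_one (w : ℝ) : |acceptance w| ≤ 1 :=
  (abs_of_nonneg (acceptance_nonneg w)).trans_le (acceptance_le_one w)

lemma lipschitzOnWith_exp_Iic : LipschitzOnWith 1 exp (Set.Iic 0) := by
  refine (convex_Iic 0).lipschitzOnWith_of_nnnorm_deriv_le
    (fun _ _ ↦ differentiableAt_exp) fun x hx ↦ ?_
  rw [Real.deriv_exp, ← NNReal.coe_le_coe, coe_nnnorm, norm_of_nonneg (exp_pos x).le]
  exact exp_le_one_iff.2 hx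

lemma lipschitzWith_acceptance : LipschitzWith 1 acceptance := by
  have hexp (w : ℝ) : acceptance w = exp (min 0 w) := by
    rw [acceptance, exp_monotone.map_min, exp_zero]
  have hmin : LipschitzWith 1 fun w : ℝ ↦ min 0 w := LipschitzWith.id.const_min 0
  have hcomp : LipschitzOnWith (1 * 1) (exp ∘ fun w ↦ min 0 w) Set.univ :=
    lipschitzOnWith_exp_Iic.comp hmin.lipschitzOnWith fun w _ ↦ min_le_left 0 w
  rw [one_mul, lipschitzOnWith_univ] at hcomp
  rwa [funext hexp]

lemma measurable_acceptance : Measurable acceptance :=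
  lipschitzWith_acceptance.continuous.measurable

/-- The acceptance probability at log-ratio `w + B`, averaged over the noise `B ∼ μ`. -/
noncomputable def meanAcceptance (μ : Measure ℝ) (w : ℝ) : ℝ := ∫ b, acceptance (w + b) ∂μ

section MeanAcceptance

variable (μ : Measure ℝ) [IsProbabilityMeasure μ]

lemma abs_meanAcceptance_le_one (w : ℝ) : |meanAcceptance μ w| ≤ 1 := by
  simpa [meanAcceptance] using norm_integral_le_of_norm_le_const (μ := μ)
    (f := fun b ↦ acceptance (w + b)) (ae_of_all _ fun b ↦ abs_acceptance_le_one (w + b))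

lemma lipschitzWith_meanAcceptance : LipschitzWith 1 (meanAcceptance μ) := by
  have hint (w : ℝ) : Integrable (fun b ↦ acceptance (w + b)) μ :=
    integrable_comp_of_abs_le measurable_acceptance abs_acceptance_le_one (by fun_prop)
  have hdist (u v b : ℝ) : ‖acceptance (u + b) - acceptance (v + b)‖ ≤ dist u v := by
    simpa [dist_eq_norm] using lipschitzWith_acceptance.dist_le_mul (u + b) (v + b)
  refine LipschitzWith.mk_one fun u v ↦ ?_
  rw [dist_eq_norm, meanAcceptance, meanAcceptance, ← integral_sub (hint u) (hint v)]
  simpa using norm_integral_le_of_norm_le_const (μ := μ) (ae_of_all _ (hdist u v))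

end MeanAcceptance

lemma stdNormalCDF_eq_cdf : stdNormalCDF = cdf (gaussianReal 0 1) := by
  ext x
  have hpdf (t : ℝ) : exp (-t ^ 2 / 2) / √(2 * π) = gaussianPDFReal 0 1 t := by
    simp [gaussianPDFReal, div_eq_inv_mul, mul_comm]
  rw [cdf_eq_real, Measure.real, gaussianReal_apply_eq_integral _ one_ne_zero,
    ENNReal.toReal_ofReal (integral_nonneg fun t ↦ gaussianPDFReal_nonneg 0 1 t)]
  simp only [stdNormalCDF, hpdf]

lemma real_gaussianReal_Iic (x : ℝ) : (gaussianReal 0 1).real (Set.Iic x) = stdNormalCDF x := by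
  rw [stdNormalCDF_eq_cdf, cdf_eq_real]

lemma real_gaussianReal_Ioi (x : ℝ) : (gaussianReal 0 1).real (Set.Ioi x) = stdNormalCDF (-x) := by
  have := nullSingletonClass_gaussianReal (μ := 0) one_ne_zero
  have hneg : (gaussianReal 0 1).map (fun g ↦ -g) = gaussianReal 0 1 := by
    rw [gaussianReal_map_neg, neg_zero]
  rw [← real_gaussianReal_Iic, ← measureReal_congr Iio_ae_eq_Iic, ← hneg,
    map_measureReal_apply (by fun_prop) measurableSet_Ioi, hneg]
  congr 1
  ext g
  simp

lemma integral_exp_mul_gaussianReal (a : ℝ) (F : ℝ → ℝ) :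
    ∫ g, exp (a * g - a ^ 2 / 2) * F g ∂gaussianReal 0 1 = ∫ g, F (g + a) ∂gaussianReal 0 1 := by
  simp only [integral_gaussianReal_eq_integral_smul one_ne_zero, smul_eq_mul]
  rw [← integral_add_right_eq_self _ a]
  congr with g
  rw [← mul_assoc, gaussianPDFReal, gaussianPDFReal, mul_assoc _ (exp _) (exp _), ← exp_add]
  simp only [NNReal.coe_one]
  ring_nf

lemma integral_acceptance_gaussianReal {a : ℝ} (ha : 0 < a) (b : ℝ) :
    ∫ g, acceptance (a * g - a ^ 2 / 2 + b) ∂gaussianReal 0 1 =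
      stdNormalCDF (b / a - a / 2) + exp b * stdNormalCDF (-b / a - a / 2) := by
  let c := a / 2 - b / a
  have hc (g : ℝ) : g ≤ c ↔ a * g - a ^ 2 / 2 + b ≤ 0 := by
    rw [← mul_le_mul_iff_right₀ ha, show a * c = a ^ 2 / 2 - b by simp only [c]; field_simp]
    constructor <;> intro h <;> linarith
  have hsplit (g : ℝ) : acceptance (a * g - a ^ 2 / 2 + b) = (Set.Ioi c).indicator 1 g +
      exp b * (exp (a * g - a ^ 2 / 2) * (Set.Iic c).indicator 1 g) := by
    rw [← mul_assoc, ← exp_add, add_comm b]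
    by_cases hg : g ≤ c
    · simp [hg, acceptance, (hc g).1 hg]
    · have hw : 0 ≤ a * g - a ^ 2 / 2 + b := (not_le.1 (mt (hc g).2 hg)).le
      simp [hg, not_le.1 hg, acceptance, hw]
  have hshift (g : ℝ) : (Set.Iic c).indicator (1 : ℝ → ℝ) (g + a) =
      (Set.Iic (c - a)).indicator 1 g := by
    simp [Set.indicator_apply, le_sub_iff_add_le]
  have hlow : Integrable (fun g ↦ exp (a * g - a ^ 2 / 2) * (Set.Iic c).indicator 1 g)
      (gaussianReal 0 1) := by
    simp only [exp_sub, div_eq_mul_inv]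
    refine ((integrable_exp_mul_gaussianReal a).mul_const _).mul_bdd (c := 1)
      (measurable_one.indicator measurableSet_Iic).aestronglyMeasurable (ae_of_all _ fun g ↦ ?_)
    exact (norm_indicator_le_norm_self 1 g).trans (by simp)
  have hhigh : Integrable ((Set.Ioi c).indicator (1 : ℝ → ℝ)) (gaussianReal 0 1) :=
    (integrable_const 1).indicator measurableSet_Ioi
  simp only [hsplit]
  rw [integral_add hhigh (hlow.const_mul _), integral_const_mul, integral_exp_mul_gaussianReal]
  simp only [hshift]
  rw [integral_indicator_one measurableSet_Iic, integral_indicator_one measurableSet_Ioi,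
    real_gaussianReal_Iic, real_gaussianReal_Ioi]
  congr 3 <;> simp only [c] <;> ring

section Symmetry

-- In terms of the law `μ` of `B`, the symmetry `ρ b = e^{-b} ρ (-b)` of the density says that the
-- law of `-B` has density `e^b` with respect to `μ`.
lemma map_neg_withDensity_eq {ρ : ℝ → ℝ} (hρ : Measurable ρ)
    (hρ_symm : ∀ b, ρ b = exp (-b) * ρ (-b)) :
    (volume.withDensity fun b ↦ ENNReal.ofReal (ρ b)).map Neg.neg =
      (volume.withDensity fun b ↦ ENNReal.ofReal (ρ b)).withDensity
        fun b ↦ ENNReal.ofReal (exp b) := by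
  have hdensity : (fun b ↦ ENNReal.ofReal (ρ b)) * (fun b ↦ ENNReal.ofReal (exp b)) =
      fun b ↦ ENNReal.ofReal (ρ (-b)) := by
    ext b
    rw [Pi.mul_apply, ← ENNReal.ofReal_mul' (exp_pos b).le, hρ_symm (-b), neg_neg, mul_comm]
  rw [← withDensity_mul _ (by fun_prop) (by fun_prop), hdensity]
  ext S hS
  rw [Measure.map_apply measurable_neg hS, withDensity_apply _ (measurable_neg hS),
    withDensity_apply _ hS, ← (Measure.measurePreserving_neg volume).setLIntegral_comp_preimage hS
      (by fun_prop)]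
  simp only [neg_neg]

variable {μ : Measure ℝ} (hμ : μ.map Neg.neg = μ.withDensity fun b ↦ ENNReal.ofReal (exp b))

include hμ

lemma integral_exp_mul_comp_neg (F : ℝ → ℝ) : ∫ b, exp b * F (-b) ∂μ = ∫ b, F b ∂μ := by
  have hdensity := integral_withDensity_eq_integral_toReal_smul (μ := μ)
    (f := fun b ↦ ENNReal.ofReal (exp b)) (by fun_prop) (ae_of_all _ fun _ ↦ ENNReal.ofReal_lt_top)
    fun b ↦ F (-b)
  have hmap : ∫ b, F (-b) ∂μ.map Neg.neg = ∫ b, F (- -b) ∂μ :=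
    (MeasurableEquiv.neg ℝ).measurableEmbedding.integral_map _
  rw [← hμ, hmap] at hdensity
  simpa [ENNReal.toReal_ofReal (exp_pos _).le] using hdensity.symm

lemma integrable_exp_mul_comp_neg {F : ℝ → ℝ} (hF : Integrable F μ) :
    Integrable (fun b ↦ exp b * F (-b)) μ := by
  have hneg : Integrable (fun b ↦ F (-b)) (μ.map Neg.neg) := by
    refine (MeasurableEquiv.neg ℝ).measurableEmbedding.integrable_map_iff.2 ?_
    simpa [Function.comp_def] using hF
  rw [hμ, integrable_withDensity_iff_integrable_smul' (by fun_prop)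
    (ae_of_all _ fun _ ↦ ENNReal.ofReal_lt_top)] at hneg
  simpa [ENNReal.toReal_ofReal (exp_pos _).le] using hneg

lemma integral_meanAcceptance_gaussianReal [IsProbabilityMeasure μ] {a : ℝ} (ha : 0 < a) :
    ∫ g, meanAcceptance μ (a * g - a ^ 2 / 2) ∂gaussianReal 0 1 =
      2 * ∫ b, stdNormalCDF (b / a - a / 2) ∂μ := by
  have hΦ : Integrable (fun b ↦ stdNormalCDF (b / a - a / 2)) μ := by
    have hbound (x : ℝ) : |cdf (gaussianReal 0 1) x| ≤ 1 :=
      (abs_of_nonneg (cdf_nonneg _ x)).trans_le (cdf_le_one _ x)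
    rw [stdNormalCDF_eq_cdf]
    exact integrable_comp_of_abs_le (monotone_cdf _).measurable hbound (by fun_prop)
  have hpair : Integrable (fun p : ℝ × ℝ ↦ acceptance (a * p.1 - a ^ 2 / 2 + p.2))
      ((gaussianReal 0 1).prod μ) :=
    integrable_comp_of_abs_le measurable_acceptance abs_acceptance_le_one (by fun_prop)
  simp only [meanAcceptance]
  rw [integral_integral_swap hpair]
  simp only [integral_acceptance_gaussianReal ha]
  rw [integral_add hΦ (integrable_exp_mul_comp_neg hμ hΦ),
    integral_exp_mul_comp_neg hμ fun b ↦ stdNormalCDF (b / a - a / 2), two_mul]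

end Symmetry

end AcceptanceProbability

section ExpectedSquaredJumpDistance

open scoped Matrix

lemma sqrt_sum_sq_smul_fderiv {d : ℕ} (L : (Fin d → ℝ) → ℝ) (x : Fin d → ℝ) {c : ℝ}
    (hc : 0 ≤ c) :
    √(∑ k, (c • fderiv ℝ L x) (Pi.single k 1) ^ 2) = c * √(gradNormSq L x) := by
  simp only [FunLike.coe_smul, Pi.smul_apply, smul_eq_mul, mul_pow, ← Finset.mul_sum]
  rw [Real.sqrt_mul (sq_nonneg c), Real.sqrt_sq hc, gradNormSq]

lemma integral_acceptance_add_eq_integral_meanAcceptance {α : Type*} [MeasurableSpace α]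
    {μ : Measure α} [IsFiniteMeasure μ] {ν : Measure ℝ} [IsFiniteMeasure ν] {W : α → ℝ}
    (hW : Measurable W) :
    ∫ p, acceptance (W p.1 + p.2) ∂μ.prod ν = ∫ x, meanAcceptance ν (W x) ∂μ :=
  integral_prod _ (integrable_comp_of_abs_le measurable_acceptance abs_acceptance_le_one
    (by fun_prop))

variable {ι : Type*} {l : Filter ι} {d : ι → ℕ} {μX : ∀ i, Measure (Fin (d i) → ℝ)}
  [∀ i, IsProbabilityMeasure (μX i)] {L : ∀ i, (Fin (d i) → ℝ) → ℝ} {s : ι → ℝ} {ℓ : ℝ}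

lemma tendsto_integral_comp_increment (hL : ∀ i, ContDiff ℝ 2 (L i)) (hs : ∀ i, 0 < s i)
    (hgrad : TendstoZeroInProb μX (fun i x ↦ |√(gradNormSq (L i) x) / s i - 1|) l)
    (hlap : TendstoZeroInProb μX (fun i x ↦ |(hessian (L i) x).trace / s i ^ 2 + 1|) l)
    (htrace : TendstoZeroInProb μX
      (fun i x ↦ |(hessian (L i) x * hessian (L i) x).trace / s i ^ 4|) l)
    (hosc : TendstoZeroInProb (fun i ↦ (μX i).prod (gaussianPi (Fin (d i))))
      (fun i ↦ hessianOscillation (L i) ℓ (s i)) l)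
    (hℓ : 0 ≤ ℓ) {φ : ℝ → ℝ} (hφ : UniformContinuous φ) {M : ℝ} (hM : ∀ u, |φ u| ≤ M) :
    Tendsto (fun i ↦ ∫ p, φ (L i (p.1 + (ℓ / s i) • p.2) - L i p.1)
        ∂(μX i).prod (gaussianPi (Fin (d i)))) l
      (𝓝 (∫ g, φ (ℓ * g - ℓ ^ 2 / 2) ∂gaussianReal 0 1)) := by
  have hcont (i : ι) : Continuous (L i) := (hL i).continuous
  have hfderiv (i : ι) : Continuous (fderiv ℝ (L i)) := (hL i).continuous_fderiv two_ne_zero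
  have hlinear (i : ι) : Measurable fun p : (Fin (d i) → ℝ) × (Fin (d i) → ℝ) ↦
      ((ℓ / s i) • fderiv ℝ (L i) p.1) p.2 := by
    have : Continuous fun p : (Fin (d i) → ℝ) × (Fin (d i) → ℝ) ↦
      ((ℓ / s i) • fderiv ℝ (L i) p.1) p.2 := by fun_prop
    exact this.measurable
  have hscale : TendstoZeroInProb μX
      (fun i x ↦ |√(∑ k, ((ℓ / s i) • fderiv ℝ (L i) x) (Pi.single k 1) ^ 2) - ℓ|) l := by
    refine (hgrad.const_mul hℓ).mono fun i x ↦ le_of_eq ?_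
    rw [sqrt_sum_sq_smul_fderiv _ _ (div_nonneg hℓ (hs i).le), div_mul_eq_mul_div, mul_div_assoc,
      ← mul_sub_one, abs_mul, abs_of_nonneg hℓ]
  have hlim := tendsto_integral_comp_linear_gaussianPi hlinear hscale
    (hφ.comp (uniformContinuous_id.sub uniformContinuous_const)) (fun u ↦ hM (u - ℓ ^ 2 / 2))
  have hdiff := (TendstoZeroInProb.increment_sub_linear hL hlap htrace hosc).tendsto_integral_sub
    (fun i ↦ (hlinear i).sub_const _)
    (fun i ↦ by have := hcont i; exact Continuous.measurable (by fun_prop)) hφ hM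
  simpa using hdiff.add hlim

theorem stmt4_general (hL : ∀ i, ContDiff ℝ 2 (L i)) (hs : ∀ i, 0 < s i)
    (hgrad : TendstoZeroInProb μX (fun i x ↦ |√(gradNormSq (L i) x) / s i - 1|) l)
    (hlap : TendstoZeroInProb μX (fun i x ↦ |(hessian (L i) x).trace / s i ^ 2 + 1|) l)
    (htrace : TendstoZeroInProb μX
      (fun i x ↦ |(hessian (L i) x * hessian (L i) x).trace / s i ^ 4|) l)
    (hosc : TendstoZeroInProb (fun i ↦ (μX i).prod (gaussianPi (Fin (d i))))
      (fun i ↦ hessianOscillation (L i) ℓ (s i)) l)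
    (hℓ : 0 < ℓ) {μB : Measure ℝ} [IsProbabilityMeasure μB]
    (hμB : μB.map Neg.neg = μB.withDensity fun b ↦ ENNReal.ofReal (exp b))
    {T : ∀ i, Matrix (Fin (d i)) (Fin (d i)) ℝ} (hT : ∀ i, (T i).IsSymm)
    (hT_trace : ∀ᶠ i in l, (T i).trace ≠ 0)
    (hT_ecc : Tendsto (fun i ↦ (T i * T i).trace / (T i).trace ^ 2) l (𝓝 0)) :
    Tendsto (fun i ↦ s i ^ 2 / (T i).trace * (ℓ / s i) ^ 2 *
        ∫ p, (p.1.2 ⬝ᵥ T i *ᵥ p.1.2) *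
            acceptance (L i (p.1.1 + (ℓ / s i) • p.1.2) - L i p.1.1 + p.2)
          ∂((μX i).prod (gaussianPi (Fin (d i)))).prod μB) l
      (𝓝 (ℓ ^ 2 * (2 * ∫ b, stdNormalCDF (b / ℓ - ℓ / 2) ∂μB))) := by
  have hW (i : ι) : Measurable fun p : (Fin (d i) → ℝ) × (Fin (d i) → ℝ) ↦
      L i (p.1 + (ℓ / s i) • p.2) - L i p.1 := by
    have := (hL i).continuous
    exact Continuous.measurable (by fun_prop)
  have hrate := tendsto_integral_comp_increment hL hs hgrad hlap htrace hosc hℓ.le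
    (lipschitzWith_meanAcceptance μB).uniformContinuous (abs_meanAcceptance_le_one μB)
  have hweight := tendsto_integral_dotProduct_mulVec_mul_div_trace_sub hT hT_trace hT_ecc
    (P := fun i ↦ ((μX i).prod (gaussianPi (Fin (d i)))).prod μB) (Z := fun i p ↦ p.1.2)
    (f := fun i p ↦ acceptance (L i (p.1.1 + (ℓ / s i) • p.1.2) - L i p.1.1 + p.2))
    (fun i ↦ measurePreserving_snd.comp measurePreserving_fst)
    (fun i ↦ measurable_acceptance.comp (((hW i).comp measurable_fst).add measurable_snd))
    fun i p ↦ abs_acceptance_le_one _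
  rw [integral_meanAcceptance_gaussianReal hμB hℓ] at hrate
  simp only [integral_acceptance_add_eq_integral_meanAcceptance (hW _)] at hweight
  refine (((hweight.add hrate).const_mul (ℓ ^ 2)).congr fun i ↦ ?_).trans (by rw [zero_add])
  rw [sub_add_cancel]
  field_simp [(hs i).ne']

end ExpectedSquaredJumpDistance

lemma eventually_trace_ne_zero {T : ∀ d : ℕ, Matrix (Fin d) (Fin d) ℝ}
    (hT : ∀ d, (T d).PosDef) : ∀ᶠ d in atTop, (T d).trace ≠ 0 := by
  filter_upwards [eventually_ne_atTop 0] with d hd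
  have : NeZero d := ⟨hd⟩
  exact (hT d).trace_pos.ne'

/-- Theorem 1, part 2: limiting expected squared jump distance.
In the setting of Theorem 1 part 1, with weight matrices `T^(d)` that are symmetric
positive definite and satisfy `Trace[(T^(d))²]/(Trace T^(d))² → 0`, the rescaled
expected squared jump distance
`((s^(d))²/Trace T^(d)) (λ^(d))² E[‖Z‖²_{T^(d)} min(1, exp(ΔL + B))]`
converges to `J(ℓ) = ℓ² α(ℓ)` where `α(ℓ) = 2 E[Φ(B/ℓ − ℓ/2)]`. -/
theorem stmt4
    (pden : (d : ℕ) → (Fin d → ℝ) → ℝ) (hπ_pos : ∀ d x, 0 < pden d x)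
    (L : (d : ℕ) → (Fin d → ℝ) → ℝ)
    (hL : ∀ d, L d = fun x => Real.log (pden d x))
    (hL_smooth : ∀ d, ContDiff ℝ 2 (L d))
    (μX : (d : ℕ) → Measure (Fin d → ℝ))
    (hμX : ∀ d, μX d = volume.withDensity fun x => ENNReal.ofReal (pden d x))
    (hμX_prob : ∀ d, IsProbabilityMeasure (μX d))
    (ρ : ℝ → ℝ) (hρ_meas : Measurable ρ) (hρ_nonneg : ∀ b, 0 ≤ ρ b)
    (μB : Measure ℝ)
    (hμB : μB = volume.withDensity fun b => ENNReal.ofReal (ρ b))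
    (hμB_prob : IsProbabilityMeasure μB)
    (hρ_sym : ∀ b, ρ b = Real.exp (-b) * ρ (-b))
    (s : ℕ → ℝ) (hs_pos : ∀ d, 0 < s d)
    -- (i) ‖∇L^(d)(X)‖ / s^(d) → 1 in probability
    (hgrad : ∀ ε > (0 : ℝ), Tendsto (fun d =>
      μX d {x | ε < |Real.sqrt (gradNormSq (L d) x) / s d - 1|}) atTop (𝓝 0))
    -- (ii) ΔL^(d)(X) / (s^(d))² → −1 in probability
    (hlap : ∀ ε > (0 : ℝ), Tendsto (fun d =>
      μX d {x | ε < |Matrix.trace (hessian (L d) x) / (s d) ^ 2 + 1|}) atTop (𝓝 0))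
    -- (iii) Trace[(H^(d)(X))²] / (s^(d))⁴ → 0 in probability
    (htrace : ∀ ε > (0 : ℝ), Tendsto (fun d =>
      μX d {x | ε < |Matrix.trace (hessian (L d) x * hessian (L d) x) / (s d) ^ 4|})
      atTop (𝓝 0))
    -- (iv) regularity of the Hessian
    (hhess_reg : ∀ σ > (0 : ℝ), ∀ ε > (0 : ℝ), Tendsto (fun d =>
      ((μX d).prod (stdGaussian d)) {p | ε < ⨆ t ∈ Set.Ioo (0 : ℝ) 1,
        |(∑ i, ∑ j, p.2 i *
            ((hessian (L d) (p.1 + (t * σ / s d) • p.2) - hessian (L d) p.1) i j) * p.2 j)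
          / (s d) ^ 2|}) atTop (𝓝 0))
    (ℓ : ℝ) (hℓ : 0 < ℓ) (lam : ℕ → ℝ) (hlam : ∀ d, lam d = ℓ / s d)
    -- the jump-distance matrices T^(d)
    (T : (d : ℕ) → Matrix (Fin d) (Fin d) ℝ)
    (hT_symm : ∀ d, (T d).IsSymm) (hT_posdef : ∀ d, (T d).PosDef)
    (hT_ecc : Tendsto (fun d =>
      Matrix.trace (T d * T d) / (Matrix.trace (T d)) ^ 2) atTop (𝓝 0)) :
    Tendsto (fun d => (s d) ^ 2 / Matrix.trace (T d) * (lam d) ^ 2 *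
        ∫ p : ((Fin d → ℝ) × (Fin d → ℝ)) × ℝ,
          (∑ i, ∑ j, p.1.2 i * T d i j * p.1.2 j) *
            min 1 (Real.exp (L d (p.1.1 + lam d • p.1.2) - L d p.1.1 + p.2))
        ∂(((μX d).prod (stdGaussian d)).prod μB))
      atTop (𝓝 (ℓ ^ 2 * (2 * ∫ b, stdNormalCDF (b / ℓ - ℓ / 2) ∂μB))) := by
  subst hμB
  simp only [hlam, sum_sum_mul_mul]
  exact stmt4_general (d := id) hL_smooth hs_pos hgrad hlap htrace (hhess_reg ℓ hℓ) hℓ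
    (map_neg_withDensity_eq hρ_meas hρ_sym) hT_symm (eventually_trace_ne_zero hT_posdef) hT_ecc
end

section
/- (Derivative of the limiting acceptance rate.) Let B be a real random variable with Lebesgue density ρ satisfying ρ(b) = e^{−b} ρ(−b), write h(b) = e^{b/2} ρ(b) (so h is even), and define α(ℓ) = 2 · E[Φ(B/ℓ − ℓ/2)] for ℓ > 0. Then α is differentiable on (0,∞) with α′(ℓ) = − ∫_{ℝ} φ(−ℓ/2 + b/ℓ) e^{−b/2} h(b) db, where φ(x) = e^{−x²/2}/√(2π); in particular α′(ℓ) < 0 for every ℓ > 0. -/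
open MeasureTheory ProbabilityTheory Real Filter Topology

/-- The standard normal density `φ(x) = e^{−x²/2}/√(2π)`. -/
noncomputable def stdNormalPDF (x : ℝ) : ℝ :=
  Real.exp (-x ^ 2 / 2) / Real.sqrt (2 * Real.pi)

/-!
Differentiating `Φ(b/ℓ - ℓ/2)` in `ℓ` gives
`α′(ℓ) = -E[φ(B/ℓ - ℓ/2)] - (2/ℓ²) E[B φ(B/ℓ - ℓ/2)]`. Since
`φ(b/ℓ - ℓ/2) = e^{-ℓ²/8} φ(b/ℓ) e^{b/2}`, the second expectation is a multiple of
`∫ b φ(b/ℓ) h(b) db`, which vanishes: `b φ(b/ℓ)` is odd in `b` and the measure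
`h(b) db = e^{b/2} P_B(db)` is invariant under `b ↦ -b`.
-/

lemma isNegInvariant_withDensity_of_even {G : Type*} [MeasurableSpace G] [InvolutiveNeg G]
    [MeasurableNeg G] {μ : Measure G} [μ.IsNegInvariant] {f : G → ENNReal} (hf : f.Even) :
    (μ.withDensity f).IsNegInvariant := by
  refine ⟨Measure.ext fun s hs => ?_⟩
  rw [Measure.neg_apply, ← Set.neg_preimage, withDensity_apply _ hs,
    withDensity_apply _ (measurable_neg hs),
    ← (Measure.measurePreserving_neg μ).setLIntegral_comp_preimage_emb
      (MeasurableEquiv.neg G).measurableEmbedding f s]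
  simp only [hf _]

lemma integral_eq_zero_of_odd {G E : Type*} [MeasurableSpace G] [AddGroup G] [MeasurableNeg G]
    {μ : Measure G} [μ.IsNegInvariant] [NormedAddCommGroup E] [NormedSpace ℝ E]
    {f : G → E} (hf : f.Odd) : ∫ x, f x ∂μ = 0 := by
  have neg_integral_eq : -∫ x, f x ∂μ = ∫ x, f x ∂μ := by
    simpa only [hf _, integral_neg] using integral_neg_eq_self f μ
  have : IsAddTorsionFree E := .of_isTorsionFree ℝ E
  exact self_eq_neg.1 neg_integral_eq.symm

lemma integral_pos_of_forall_pos {X : Type*} [MeasurableSpace X] {μ : Measure X} [NeZero μ]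
    {f : X → ℝ} (hf : ∀ x, 0 < f x) (hfi : Integrable f μ) : 0 < ∫ x, f x ∂μ := by
  rw [integral_pos_iff_support_of_nonneg (fun x => (hf x).le) hfi,
    Function.support_eq_univ fun x => (hf x).ne']
  exact NeZero.pos _

lemma integral_withDensity_ofReal_eq_integral_mul {X : Type*} [MeasurableSpace X] {μ : Measure X}
    {ρ : X → ℝ} (hρ_meas : Measurable ρ) (hρ_nonneg : ∀ x, 0 ≤ ρ x) (f : X → ℝ) :
    ∫ x, f x ∂μ.withDensity (fun x => ENNReal.ofReal (ρ x)) = ∫ x, f x * ρ x ∂μ := by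
  rw [integral_withDensity_eq_integral_toReal_smul (by fun_prop)
    (Eventually.of_forall fun _ => ENNReal.ofReal_lt_top)]
  simp only [ENNReal.toReal_ofReal (hρ_nonneg _), smul_eq_mul, mul_comm]

lemma stdNormalPDF_eq_gaussianPDFReal : stdNormalPDF = gaussianPDFReal 0 1 := by
  ext x
  simp [stdNormalPDF, gaussianPDFReal, div_eq_inv_mul]

lemma continuous_stdNormalPDF : Continuous stdNormalPDF := by
  unfold stdNormalPDF
  fun_prop

lemma stdNormalPDF_pos (x : ℝ) : 0 < stdNormalPDF x := by
  unfold stdNormalPDF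
  positivity

lemma stdNormalPDF_neg (x : ℝ) : stdNormalPDF (-x) = stdNormalPDF x := by
  simp only [stdNormalPDF, neg_sq]

lemma integrable_stdNormalPDF : Integrable stdNormalPDF :=
  stdNormalPDF_eq_gaussianPDFReal ▸ integrable_gaussianPDFReal 0 1

lemma integral_stdNormalPDF : ∫ x, stdNormalPDF x = 1 :=
  stdNormalPDF_eq_gaussianPDFReal ▸ integral_gaussianPDFReal_eq_one 0 one_ne_zero

lemma stdNormalPDF_le_exp (x : ℝ) : stdNormalPDF x ≤ exp (-x ^ 2 / 2) :=
  div_le_self (exp_pos _).le (one_le_sqrt.2 (by linarith [pi_gt_three]))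

lemma stdNormalPDF_le_one (x : ℝ) : stdNormalPDF x ≤ 1 :=
  (stdNormalPDF_le_exp x).trans (exp_le_one_iff.2 (by linarith [sq_nonneg x]))

lemma abs_mul_stdNormalPDF_le_one (x : ℝ) : |x| * stdNormalPDF x ≤ 1 := by
  have abs_le_exp : |x| ≤ exp (x ^ 2 / 2) := by
    have := add_one_le_exp (x ^ 2 / 2)
    nlinarith [sq_abs x, sq_nonneg (|x| - 1)]
  calc |x| * stdNormalPDF x
      ≤ exp (x ^ 2 / 2) * exp (-x ^ 2 / 2) := by
        gcongr
        exacts [(stdNormalPDF_pos x).le, stdNormalPDF_le_exp x]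
    _ = 1 := by rw [← exp_add, neg_div, add_neg_cancel, exp_zero]

lemma abs_affine_mul_stdNormalPDF_le (c d x : ℝ) :
    |(c * x + d) * stdNormalPDF x| ≤ |c| + |d| := by
  have hpos := stdNormalPDF_pos x
  calc |(c * x + d) * stdNormalPDF x|
      = |c * x + d| * stdNormalPDF x := by rw [abs_mul, abs_of_pos hpos]
    _ ≤ (|c| * |x| + |d|) * stdNormalPDF x := by
        gcongr
        exact (abs_add_le _ _).trans_eq (by rw [abs_mul])
    _ = |c| * (|x| * stdNormalPDF x) + |d| * stdNormalPDF x := by ring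
    _ ≤ |c| * 1 + |d| * 1 := by
        gcongr
        exacts [abs_mul_stdNormalPDF_le_one x, stdNormalPDF_le_one x]
    _ = |c| + |d| := by ring

lemma stdNormalPDF_div_sub_half {ℓ : ℝ} (hℓ : ℓ ≠ 0) (b : ℝ) :
    stdNormalPDF (b / ℓ - ℓ / 2) = exp (-ℓ ^ 2 / 8) * (exp (b / 2) * stdNormalPDF (b / ℓ)) := by
  have exponent : -(b / ℓ - ℓ / 2) ^ 2 / 2 = -ℓ ^ 2 / 8 + (b / 2 + -(b / ℓ) ^ 2 / 2) := by
    field_simp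
    ring
  simp only [stdNormalPDF, exponent, exp_add, mul_div_assoc]

lemma stdNormalCDF_nonneg (x : ℝ) : 0 ≤ stdNormalCDF x :=
  integral_nonneg fun t => (stdNormalPDF_pos t).le

lemma stdNormalCDF_le_one (x : ℝ) : stdNormalCDF x ≤ 1 :=
  (setIntegral_le_integral integrable_stdNormalPDF
    (Eventually.of_forall fun t => (stdNormalPDF_pos t).le)).trans_eq integral_stdNormalPDF

lemma hasDerivAt_stdNormalCDF (x : ℝ) : HasDerivAt stdNormalCDF (stdNormalPDF x) x := by
  have cdf_eq : stdNormalCDF = fun y => stdNormalCDF 0 + ∫ t in (0 : ℝ)..y, stdNormalPDF t := by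
    ext y
    exact eq_add_of_sub_eq' (intervalIntegral.integral_Iic_sub_Iic
      integrable_stdNormalPDF.integrableOn integrable_stdNormalPDF.integrableOn)
  rw [cdf_eq]
  exact (continuous_stdNormalPDF.integral_hasStrictDerivAt 0 x).hasDerivAt.const_add _

lemma continuous_stdNormalCDF : Continuous stdNormalCDF :=
  continuous_iff_continuousAt.2 fun x => (hasDerivAt_stdNormalCDF x).continuousAt

lemma hasDerivAt_div_sub_half (b : ℝ) {ℓ : ℝ} (hℓ : ℓ ≠ 0) :
    HasDerivAt (fun x => b / x - x / 2) (-(b / ℓ ^ 2 + 1 / 2)) ℓ := by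
  refine (((hasDerivAt_inv hℓ).const_mul b).sub
    ((hasDerivAt_id ℓ).div_const 2)).congr_deriv ?_
  ring

lemma hasDerivAt_stdNormalCDF_div_sub_half (b : ℝ) {ℓ : ℝ} (hℓ : ℓ ≠ 0) :
    HasDerivAt (fun x => stdNormalCDF (b / x - x / 2))
      (-((b / ℓ ^ 2 + 1 / 2) * stdNormalPDF (b / ℓ - ℓ / 2))) ℓ :=
  ((hasDerivAt_stdNormalCDF _).comp ℓ (hasDerivAt_div_sub_half b hℓ)).congr_deriv (by ring)

lemma abs_add_half_mul_stdNormalPDF_div_sub_half_le (b : ℝ) {ℓ : ℝ} (hℓ : ℓ ≠ 0) :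
    |(b / ℓ ^ 2 + 1 / 2) * stdNormalPDF (b / ℓ - ℓ / 2)| ≤ |ℓ|⁻¹ + 1 := by
  have affine : b / ℓ ^ 2 + 1 / 2 = ℓ⁻¹ * (b / ℓ - ℓ / 2) + 1 := by
    field_simp
    ring
  simpa only [affine, abs_inv, abs_one] using
    abs_affine_mul_stdNormalPDF_le ℓ⁻¹ 1 (b / ℓ - ℓ / 2)

/-- The measure `e^{b/2} μ(db)`. If `μ` has density `ρ`, it has density `h(b) = e^{b/2} ρ(b)`, so
the symmetry `ρ(b) = e^{-b} ρ(-b)` says that it is invariant under `b ↦ -b`. -/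
noncomputable def halfTilt (μ : Measure ℝ) : Measure ℝ :=
  μ.withDensity fun b => ENNReal.ofReal (exp (b / 2))

lemma isNegInvariant_halfTilt_withDensity {ρ : ℝ → ℝ} (hρ_meas : Measurable ρ)
    (hρ_sym : ∀ b, ρ b = exp (-b) * ρ (-b)) :
    (halfTilt (volume.withDensity fun b => ENNReal.ofReal (ρ b))).IsNegInvariant := by
  have even : Function.Even fun b => exp (b / 2) * ρ b := fun b => by
    simp only [hρ_sym b, ← mul_assoc, ← exp_add]
    ring_nf
  have density_eq : halfTilt (volume.withDensity fun b => ENNReal.ofReal (ρ b)) =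
      volume.withDensity fun b => ENNReal.ofReal (exp (b / 2) * ρ b) := by
    rw [halfTilt, ← withDensity_mul _ (by fun_prop) (by fun_prop)]
    congr with b
    rw [Pi.mul_apply, mul_comm, ENNReal.ofReal_mul (exp_pos _).le]
  rw [density_eq]
  exact isNegInvariant_withDensity_of_even fun b => congrArg ENNReal.ofReal (even b)

lemma integral_halfTilt (μ : Measure ℝ) (f : ℝ → ℝ) :
    ∫ b, f b ∂halfTilt μ = ∫ b, f b * exp (b / 2) ∂μ :=
  integral_withDensity_ofReal_eq_integral_mul (by fun_prop) (fun b => (exp_pos (b / 2)).le) f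

lemma integral_mul_stdNormalPDF_div_sub_half_eq_zero {μ : Measure ℝ}
    (hμ : (halfTilt μ).IsNegInvariant) {ℓ : ℝ} (hℓ : ℓ ≠ 0) :
    ∫ b, b * stdNormalPDF (b / ℓ - ℓ / 2) ∂μ = 0 := by
  have odd : Function.Odd fun b => b * stdNormalPDF (b / ℓ) := fun b => by
    simp only [neg_div, stdNormalPDF_neg, neg_mul]
  calc ∫ b, b * stdNormalPDF (b / ℓ - ℓ / 2) ∂μ
      = ∫ b, exp (-ℓ ^ 2 / 8) * (b * stdNormalPDF (b / ℓ) * exp (b / 2)) ∂μ := by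
        congr with b
        rw [stdNormalPDF_div_sub_half hℓ]
        ring
    _ = exp (-ℓ ^ 2 / 8) * ∫ b, b * stdNormalPDF (b / ℓ) ∂halfTilt μ := by
        rw [integral_const_mul, integral_halfTilt]
    _ = 0 := by rw [integral_eq_zero_of_odd odd, mul_zero]

/-- The limiting acceptance rate `α(ℓ) = 2 E[Φ(B/ℓ - ℓ/2)]` for a noise difference `B` with
law `μ`. -/
noncomputable def limitingAcceptanceRate (μ : Measure ℝ) (ℓ : ℝ) : ℝ :=
  2 * ∫ b, stdNormalCDF (b / ℓ - ℓ / 2) ∂μ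

section FiniteMeasure

variable (μ : Measure ℝ) [IsFiniteMeasure μ]

lemma integrable_stdNormalPDF_div_sub_half (ℓ : ℝ) :
    Integrable (fun b => stdNormalPDF (b / ℓ - ℓ / 2)) μ :=
  .of_bound (continuous_stdNormalPDF.comp (by fun_prop)).aestronglyMeasurable 1
    (Eventually.of_forall fun b =>
      (norm_of_nonneg (stdNormalPDF_pos _).le).trans_le (stdNormalPDF_le_one _))

lemma integrable_mul_stdNormalPDF_div_sub_half {ℓ : ℝ} (hℓ : ℓ ≠ 0) :
    Integrable (fun b => b * stdNormalPDF (b / ℓ - ℓ / 2)) μ := by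
  refine .of_bound
    (continuous_id.mul (continuous_stdNormalPDF.comp (by fun_prop))).aestronglyMeasurable
    (|ℓ| + |ℓ ^ 2 / 2|) (Eventually.of_forall fun b => ?_)
  have affine : ℓ * (b / ℓ - ℓ / 2) + ℓ ^ 2 / 2 = b := by
    field_simp
    ring
  have bound := abs_affine_mul_stdNormalPDF_le ℓ (ℓ ^ 2 / 2) (b / ℓ - ℓ / 2)
  rwa [affine] at bound

lemma integrable_stdNormalCDF_div_sub_half (ℓ : ℝ) :
    Integrable (fun b => stdNormalCDF (b / ℓ - ℓ / 2)) μ :=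
  .of_bound (continuous_stdNormalCDF.comp (by fun_prop)).aestronglyMeasurable 1
    (Eventually.of_forall fun b =>
      (norm_of_nonneg (stdNormalCDF_nonneg _)).trans_le (stdNormalCDF_le_one _))

lemma hasDerivAt_integral_stdNormalCDF_div_sub_half {ℓ : ℝ} (hℓ : ℓ ≠ 0) :
    HasDerivAt (fun x => ∫ b, stdNormalCDF (b / x - x / 2) ∂μ)
      (∫ b, -((b / ℓ ^ 2 + 1 / 2) * stdNormalPDF (b / ℓ - ℓ / 2)) ∂μ) ℓ := by
  have half_pos : 0 < |ℓ| / 2 := by positivity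
  have nhds : {x : ℝ | |ℓ| / 2 < |x|} ∈ 𝓝 ℓ :=
    (isOpen_lt continuous_const continuous_abs).mem_nhds (half_lt_self (abs_pos.2 hℓ))
  refine (hasDerivAt_integral_of_dominated_loc_of_deriv_le
    (bound := fun _ => (|ℓ| / 2)⁻¹ + 1) nhds
    (Eventually.of_forall fun x =>
      (integrable_stdNormalCDF_div_sub_half μ x).aestronglyMeasurable)
    (integrable_stdNormalCDF_div_sub_half μ ℓ) ?_
    (Eventually.of_forall fun b x (hx : |ℓ| / 2 < |x|) => ?_) (integrable_const _)
    (Eventually.of_forall fun b x (hx : |ℓ| / 2 < |x|) =>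
      hasDerivAt_stdNormalCDF_div_sub_half b (abs_pos.1 (half_pos.trans hx)))).2
  · have := continuous_stdNormalPDF
    exact Continuous.aestronglyMeasurable (by fun_prop)
  · rw [norm_neg, norm_eq_abs]
    refine (abs_add_half_mul_stdNormalPDF_div_sub_half_le b
      (abs_pos.1 (half_pos.trans hx))).trans ?_
    gcongr

lemma hasDerivAt_limitingAcceptanceRate {ℓ : ℝ} (hℓ : ℓ ≠ 0) :
    HasDerivAt (limitingAcceptanceRate μ)
      (-((∫ b, stdNormalPDF (b / ℓ - ℓ / 2) ∂μ) +
        2 / ℓ ^ 2 * ∫ b, b * stdNormalPDF (b / ℓ - ℓ / 2) ∂μ)) ℓ := by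
  refine ((hasDerivAt_integral_stdNormalCDF_div_sub_half μ hℓ).const_mul 2).congr_deriv ?_
  rw [integral_neg, mul_neg, ← integral_const_mul, ← integral_const_mul, ← integral_add
    (integrable_stdNormalPDF_div_sub_half μ ℓ)
    ((integrable_mul_stdNormalPDF_div_sub_half μ hℓ).const_mul _)]
  congr with b
  ring

end FiniteMeasure

theorem stmt8_general (μ : Measure ℝ) [IsFiniteMeasure μ] [NeZero μ]
    (hμ : (halfTilt μ).IsNegInvariant) {ℓ : ℝ} (hℓ : ℓ ≠ 0) :
    HasDerivAt (limitingAcceptanceRate μ) (-∫ b, stdNormalPDF (-ℓ / 2 + b / ℓ) ∂μ) ℓ ∧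
      0 < ∫ b, stdNormalPDF (-ℓ / 2 + b / ℓ) ∂μ := by
  simp only [neg_div, neg_add_eq_sub]
  refine ⟨?_, integral_pos_of_forall_pos (fun b => stdNormalPDF_pos _)
    (integrable_stdNormalPDF_div_sub_half μ ℓ)⟩
  simpa only [integral_mul_stdNormalPDF_div_sub_half_eq_zero hμ hℓ, mul_zero, add_zero] using
    hasDerivAt_limitingAcceptanceRate μ hℓ

/-- derivative of the limiting acceptance rate.  With `B` having
density `ρ` satisfying `ρ(b) = e^{−b} ρ(−b)`, `h(b) = e^{b/2} ρ(b)` and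
`α(ℓ) = 2 E[Φ(B/ℓ − ℓ/2)]`, `α` is differentiable on `(0,∞)` with
`α′(ℓ) = −∫ φ(−ℓ/2 + b/ℓ) e^{−b/2} h(b) db < 0`. -/
theorem stmt8
    (ρ : ℝ → ℝ) (hρ_meas : Measurable ρ) (hρ_nonneg : ∀ b, 0 ≤ ρ b)
    (μB : Measure ℝ)
    (hμB : μB = volume.withDensity fun b => ENNReal.ofReal (ρ b))
    (hμB_prob : IsProbabilityMeasure μB)
    (hρ_sym : ∀ b, ρ b = Real.exp (-b) * ρ (-b))
    (h : ℝ → ℝ) (hh : ∀ b, h b = Real.exp (b / 2) * ρ b)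
    (α : ℝ → ℝ) (hα : ∀ ℓ, α ℓ = 2 * ∫ b, stdNormalCDF (b / ℓ - ℓ / 2) ∂μB) :
    ∀ ℓ > (0 : ℝ),
      HasDerivAt α
        (-(∫ b : ℝ, stdNormalPDF (-ℓ / 2 + b / ℓ) * (Real.exp (-b / 2) * h b))) ℓ ∧
      0 < ∫ b : ℝ, stdNormalPDF (-ℓ / 2 + b / ℓ) * (Real.exp (-b / 2) * h b) := by
  obtain rfl : α = limitingAcceptanceRate μB := funext hα
  subst hμB
  have hρ : ∀ b, exp (-b / 2) * h b = ρ b := fun b => by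
    rw [hh, ← mul_assoc, ← exp_add, neg_div, neg_add_cancel, exp_zero, one_mul]
  intro ℓ hℓ
  simpa only [hρ, integral_withDensity_ofReal_eq_integral_mul hρ_meas hρ_nonneg] using
    stmt8_general _ (isNegInvariant_halfTilt_withDensity hρ_meas hρ_sym) hℓ.ne'
end
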